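/- For every integer m with m not congruent to 0 mod n and m not congruent to -1 mod n, the rational characteristic sequence satisfies the palindrome property k_{n-1-m} = k_m. -/

import Mathlib

/-- The rational characteristic sequence with respect to `(n, l)`:
`k_m = ⌊(m+1)l/n⌋ - ⌊ml/n⌋` for `m ∈ ℤ`. -/
def charSeq (n l : ℕ) (m : ℤ) : ℤ :=
  Int.fdiv ((m + 1) * l) n - Int.fdiv (m * l) n

/-- Palindrome property: `k_{n-1-m} = k_m` for `m` not ≡ `0` or `-1` mod `n`. -/
theorem charSeq_palindrome (n l : ℕ) (hn : 2 ≤ n) (hl : l < n)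
    (hgcd : Nat.gcd n l = 1) (m : ℤ)
    (h0 : ¬ (n : ℤ) ∣ m) (h1 : ¬ (n : ℤ) ∣ (m + 1)) :
    charSeq n l ((n : ℤ) - 1 - m) = charSeq n l m := by
  have hnpos : (0 : ℤ) < n := by exact_mod_cast (by omega : 0 < n)
  have hc : IsCoprime (n : ℤ) (l : ℤ) := Nat.isCoprime_iff_coprime.mpr hgcd
  have key : ∀ a : ℤ, ¬ (n : ℤ) ∣ a →
      (((n : ℤ) - a) * l) / n = l - 1 - (a * l) / n := by
    intro a ha
    have hnd : ¬ (n : ℤ) ∣ a * l := fun h => ha (hc.dvd_of_dvd_mul_right h)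
    have e := Int.emod_add_mul_ediv (a * l) n
    have p := Int.emod_nonneg (a * l) hnpos.ne'
    have q := Int.emod_lt_of_pos (a * l) hnpos
    have r : (a * l) % n ≠ 0 := fun h => hnd (Int.dvd_of_emod_eq_zero h)
    have p' : 0 < (a * l) % (n : ℤ) := lt_of_le_of_ne p (Ne.symm r)
    apply (Int.ediv_eq_iff_of_pos hnpos).mpr
    constructor <;> nlinarith
  have k0 := key m h0
  have k1 := key (m + 1) h1
  unfold charSeq
  simp only [Int.fdiv_eq_ediv_of_nonneg _ hnpos.le]
  rw [show (n : ℤ) - 1 - m + 1 = n - m by ring, show (n : ℤ) - 1 - m = n - (m + 1) by ring,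
    k0, k1]
  ring
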